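/- There exist a finite group Q and a surjective group homomorphism p from W onto Q such that: (i) the subgroup of Q generated by p(a), p(b), p(c), p(d), p(e) is isomorphic to [3,3,4,3]_{(6,6,0,0)} (the quotient of the Coxeter group [3,3,4,3] on a,...,e by the normal closure of (a*sigma*tau)^{12}); (ii) the subgroup generated by p(b), p(c), p(d), p(e), p(f) is isomorphic to [3,4,3,3]_{(3,0,0,0)} (the quotient of the Coxeter group [3,4,3,3] on b,...,f by the normal closure of (f*tau*sigma*tau)^3); and (iii) the intersection property holds: for all subsets I, J of {a,b,c,d,e,f}, the subgroup generated by p(I) intersected with the subgroup generated by p(J) equals the subgroup generated by p(I ∩ J). (Hence a finite locally toroidal polytope of type {{3,3,4,3}_{(6,6,0,0)}, {3,4,3,3}_{(3,0,0,0)}} exists.) -/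

import Mathlib

/-- Coxeter matrix of the string diagram [3,3,4,3,3] on generators a,b,c,d,e,f = 0..5. -/
def cox6 : Fin 6 → Fin 6 → ℕ := fun i j =>
  if i = j then 1
  else if (i : ℕ) + 1 = (j : ℕ) ∨ (j : ℕ) + 1 = (i : ℕ) then
    (if ((i : ℕ) = 2 ∧ (j : ℕ) = 3) ∨ ((i : ℕ) = 3 ∧ (j : ℕ) = 2) then 4 else 3)
  else 2

def rels6 : Set (FreeGroup (Fin 6)) :=
  Set.range fun p : Fin 6 × Fin 6 => (FreeGroup.of p.1 * FreeGroup.of p.2) ^ cox6 p.1 p.2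

/-- The Coxeter group of type [3,3,4,3,3]. -/
abbrev W : Type := PresentedGroup rels6

/-- The generators a,b,c,d,e,f of W, as w 0, ..., w 5. -/
def w (i : Fin 6) : W := PresentedGroup.of i

/-- sigma = d^(cb) = b*c*d*c*b. -/
def sg : W := w 1 * w 2 * w 3 * w 2 * w 1
/-- tau = c^(de) = e*d*c*d*e. -/
def tu : W := w 4 * w 3 * w 2 * w 3 * w 4

/-- Coxeter matrix of the string diagram [3,3,4,3] on generators a,b,c,d,e = 0..4. -/
def cox5 : Fin 5 → Fin 5 → ℕ := fun i j =>
  if i = j then 1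
  else if (i : ℕ) + 1 = (j : ℕ) ∨ (j : ℕ) + 1 = (i : ℕ) then
    (if ((i : ℕ) = 2 ∧ (j : ℕ) = 3) ∨ ((i : ℕ) = 3 ∧ (j : ℕ) = 2) then 4 else 3)
  else 2

def rels5 : Set (FreeGroup (Fin 5)) :=
  Set.range fun p : Fin 5 × Fin 5 => (FreeGroup.of p.1 * FreeGroup.of p.2) ^ cox5 p.1 p.2

/-- The Coxeter group of type [3,3,4,3]. -/
abbrev W5 : Type := PresentedGroup rels5

def v (i : Fin 5) : W5 := PresentedGroup.of i

/-- sigma = d^(cb) = b*c*d*c*b. -/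
def sg5 : W5 := v 1 * v 2 * v 3 * v 2 * v 1
/-- tau = c^(de) = e*d*c*d*e. -/
def tu5 : W5 := v 4 * v 3 * v 2 * v 3 * v 4

/-- [3,3,4,3]_{(s,s,0,0)} : the quotient of [3,3,4,3] by the normal closure of (a σ τ)^{2s}. -/
abbrev Gq (s : ℕ) : Type := W5 ⧸ Subgroup.normalClosure ({(v 0 * sg5 * tu5) ^ (2 * s)} : Set W5)

/-- [3,3,4,3]_{(s,0,0,0)} : the quotient of [3,3,4,3] by the normal closure of (a σ τ σ)^s. -/
abbrev Hq (s : ℕ) : Type := W5 ⧸ Subgroup.normalClosure ({(v 0 * sg5 * tu5 * sg5) ^ s} : Set W5)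

/-- The quotient map W5 → [3,3,4,3]_{(s,s,0,0)}. -/
def piG (s : ℕ) : W5 →* Gq s := QuotientGroup.mk' _

/-- The quotient map W5 → [3,3,4,3]_{(s,0,0,0)}. -/
def piH (s : ℕ) : W5 →* Hq s := QuotientGroup.mk' _

/-- Coxeter matrix of the string diagram [3,4,3,3] on generators b,c,d,e,f = 0..4. -/
def cox5d : Fin 5 → Fin 5 → ℕ := fun i j =>
  if i = j then 1
  else if (i : ℕ) + 1 = (j : ℕ) ∨ (j : ℕ) + 1 = (i : ℕ) then
    (if ((i : ℕ) = 1 ∧ (j : ℕ) = 2) ∨ ((i : ℕ) = 2 ∧ (j : ℕ) = 1) then 4 else 3)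
  else 2

def rels5d : Set (FreeGroup (Fin 5)) :=
  Set.range fun p : Fin 5 × Fin 5 => (FreeGroup.of p.1 * FreeGroup.of p.2) ^ cox5d p.1 p.2

/-- The Coxeter group of type [3,4,3,3], generators b,c,d,e,f = 0..4. -/
abbrev V5 : Type := PresentedGroup rels5d

def u (i : Fin 5) : V5 := PresentedGroup.of i

/-- sigma = b*c*d*c*b (in terms of b,c,d,e,f). -/
def sgd : V5 := u 0 * u 1 * u 2 * u 1 * u 0
/-- tau = e*d*c*d*e (in terms of b,c,d,e,f). -/
def tud : V5 := u 3 * u 2 * u 1 * u 2 * u 3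

/-- [3,4,3,3]_{(3,0,0,0)} : the quotient of [3,4,3,3] by the normal closure of (f τ σ τ)^3. -/
abbrev Vq : Type := V5 ⧸ Subgroup.normalClosure ({(u 4 * tud * sgd * tud) ^ 3} : Set V5)

/-!
Let `Q` be the image of `[3,3,4,3,3]` under the sum of two representations: the geometric
representation reduced modulo 3, and a 24-dimensional representation over `𝔽₂`.

The facet and vertex-figure groups are both affine of type `F₄`. A normal subgroup of the affine
group that contains only translations is determined by a lattice stable under `l ↦ l i • α_i`, and
such a lattice is pinned down by the orders of `aστ` and `aστσ`. The first representation sees the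
3-part of these orders and the second one the 2-part. An element acting trivially modulo 3 is
automatically a translation, since distinct long roots of `F₄` stay distinct modulo 3.

For the intersection property, a parabolic subgroup omitting an interior node is finite, and no
other member of its orbit of a coordinate functional is congruent to that functional modulo 3. So
whether an element lies in a smaller parabolic subgroup can be read off modulo 3. What remains is
the intersection of the facet group with the vertex-figure group. It cannot be larger than the
group of type `F₄`, because the translation lattice modulo 3 is irreducible under that group.
-/

open CoxeterSystem Matrix

section Parabolic

variable {B G : Type*} [Group G] {M : CoxeterMatrix B} (cs : CoxeterSystem M G)

/-- The standard parabolic subgroup of a Coxeter group generated by the simple reflections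
indexed by `I`. -/
def parabolic (I : Set B) : Subgroup G :=
  Subgroup.closure (cs.simple '' I)

theorem simple_mem_parabolic {I : Set B} {i : B} (hi : i ∈ I) : cs.simple i ∈ parabolic cs I :=
  Subgroup.subset_closure ⟨i, hi, rfl⟩

theorem parabolic_univ : parabolic cs Set.univ = ⊤ := by
  rw [parabolic, Set.image_univ, cs.subgroup_closure_range_simple]

theorem parabolic_mono {I J : Set B} (h : I ⊆ J) : parabolic cs I ≤ parabolic cs J :=
  Subgroup.closure_mono (Set.image_mono h)

theorem wordProd_pow (ω : List B) (n : ℕ) :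
    cs.wordProd ω ^ n = cs.wordProd (List.replicate n ω).flatten := by
  induction n with
  | zero => simp
  | succ n ih => rw [pow_succ', ih, List.replicate_succ, List.flatten_cons, wordProd_append]

theorem isRightDescent_mul_alternatingWord {i j : B} {w : G} (hM : M i j ≠ 0)
    (hlen : cs.length (w * cs.wordProd (alternatingWord i j (M i j))) = cs.length w + M i j) :
    cs.IsRightDescent (w * cs.wordProd (alternatingWord i j (M i j))) i := by
  obtain ⟨m, hm⟩ := Nat.exists_eq_succ_of_ne_zero hM
  have hbraid := cs.wordProd_braidWord_eq i j
  simp only [braidWord, M.symmetric j i, hm, alternatingWord_succ j i, List.concat_eq_append,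
    wordProd_append, wordProd_singleton] at hbraid
  rw [hm] at hlen ⊢
  rw [IsRightDescent, hlen, hbraid, mul_assoc, mul_assoc, simple_mul_simple_self, mul_one]
  have := cs.length_mul_le w (cs.wordProd (alternatingWord i j m))
  have := cs.length_wordProd_le (alternatingWord i j m)
  rw [length_alternatingWord] at this
  omega

-- The factorisation of `w` through a minimal representative of its left coset of `⟨s_i, s_j⟩`.
theorem exists_eq_mul_alternatingWord {i j : B} {w : G} (hi : ¬cs.IsRightDescent w i)
    (hM : M i j ≠ 0) :
    ∃ k < M i j, ∃ w', w = w' * cs.wordProd (alternatingWord i j k) ∧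
      cs.length w = cs.length w' + k ∧ ¬cs.IsRightDescent w' i ∧ ¬cs.IsRightDescent w' j := by
  classical
  let P : ℕ → Prop := fun k =>
    ∃ w', w = w' * cs.wordProd (alternatingWord i j k) ∧ cs.length w = cs.length w' + k
  have h0 : P 0 := ⟨w, by simp [alternatingWord], by simp⟩
  have hPM : ¬P (M i j) := by
    rintro ⟨w', rfl, hlen⟩
    exact hi (isRightDescent_mul_alternatingWord cs hM hlen)
  obtain ⟨k, hkM, ⟨w', hw, hlen⟩, hk⟩ : ∃ k < M i j, P k ∧ ¬P (k + 1) := by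
    by_contra! h
    have hP : ∀ k ≤ M i j, P k := fun k => k.rec (fun _ => h0) fun k ih hk => h k hk (ih (by omega))
    exact hPM (hP _ le_rfl)
  have hnext : ¬cs.IsRightDescent w' (if Even k then j else i) := fun hd =>
    hk ⟨w' * cs.simple _, by
      rw [alternatingWord_succ', wordProd_cons, mul_assoc, simple_mul_simple_cancel_left, hw], by
      rw [hlen, ← cs.isRightDescent_iff.mp hd]; omega⟩
  have hprev : ¬cs.IsRightDescent w' (if Even k then i else j) := by
    cases k with
    | zero => simpa [alternatingWord, hw] using hi
    | succ k =>
      intro hd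
      rw [alternatingWord_succ', wordProd_cons, ← mul_assoc] at hw
      have := cs.length_mul_le (w' * cs.simple (if Even k then j else i))
        (cs.wordProd (alternatingWord i j k))
      have := cs.length_wordProd_le (alternatingWord i j k)
      rw [length_alternatingWord] at this
      rw [hw] at hlen
      have hd := cs.isRightDescent_iff.mp hd
      simp only [Nat.even_add_one, ite_not] at hd
      omega
  refine ⟨k, hkM, w', hw, hlen, ?_⟩
  split_ifs at hnext hprev
  exacts [⟨hprev, hnext⟩, ⟨hnext, hprev⟩]

end Parabolic

section RootRepresentation

variable {B : Type*}

/-- `A` is an integral Cartan matrix whose Coxeter matrix is `M`. For simplicity all labels of `M`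
are `2`, `3` or `4`, so that `A i j * A j i = 4 cos² (π / M i j) = M i j - 2`. -/
structure IsCartanMatrix (M : CoxeterMatrix B) (A : Matrix B B ℤ) : Prop where
  diag : ∀ i, A i i = 2
  nonpos : ∀ i j, i ≠ j → A i j ≤ 0
  eq_zero : ∀ i j, A i j = 0 → A j i = 0
  coxeter : ∀ i j, i ≠ j → (M i j : ℤ) = 2 + A i j * A j i
  mul_le : ∀ i j, i ≠ j → A i j * A j i ≤ 2

theorem IsCartanMatrix.cases_of_ne {M : CoxeterMatrix B} {A : Matrix B B ℤ}
    (hA : IsCartanMatrix M A) {i j : B} (hij : i ≠ j) :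
    (M i j = 2 ∧ A i j = 0 ∧ A j i = 0) ∨ (M i j = 3 ∧ A i j = -1 ∧ A j i = -1) ∨
      (M i j = 4 ∧ A i j = -1 ∧ A j i = -2) ∨ (M i j = 4 ∧ A i j = -2 ∧ A j i = -1) := by
  have hM := hA.coxeter i j hij
  have hle := hA.mul_le i j hij
  have hp := hA.nonpos i j hij
  have hq := hA.nonpos j i hij.symm
  have hpq := hA.eq_zero i j
  have hqp := hA.eq_zero j i
  obtain hp0 | hp0 := hp.eq_or_lt
  · rw [hp0, hpq hp0] at hM
    exact .inl ⟨by omega, hp0, hpq hp0⟩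
  · have hq0 : A j i < 0 := lt_of_le_of_ne hq fun h => hp0.ne (hqp h)
    have : -2 ≤ A i j := by nlinarith
    have : -2 ≤ A j i := by nlinarith
    obtain h | h : A i j = -1 ∨ A i j = -2 := by omega
    all_goals obtain h' | h' : A j i = -1 ∨ A j i = -2 := by omega
    all_goals
      rw [h, h'] at hM hle ⊢
      omega

variable [DecidableEq B]

/-- The reflection `x ↦ x - (A i ⬝ᵥ x) α_i` in the basis of simple roots; as a matrix it acts on
columns (roots) from the left and on rows (functionals) from the right. -/
def simpleReflection (A : Matrix B B ℤ) (i : B) : Matrix B B ℤ :=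
  1 - vecMulVec (Pi.single i 1) (A i)

theorem vecMul_simpleReflection [Fintype B] (A : Matrix B B ℤ) (i : B) (l : B → ℤ) :
    l ᵥ* simpleReflection A i = l - l i • A i := by
  simp [simpleReflection, vecMul_sub, vecMul_vecMulVec]

theorem simpleReflection_mulVec [Fintype B] (A : Matrix B B ℤ) (i : B) (x : B → ℤ) :
    simpleReflection A i *ᵥ x = x - (A i ⬝ᵥ x) • Pi.single i 1 := by
  simp [simpleReflection, sub_mulVec, vecMulVec_mulVec]

theorem simpleReflection_mulVec_single [Fintype B] (A : Matrix B B ℤ) (i j : B) :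
    simpleReflection A i *ᵥ Pi.single j 1 = Pi.single j 1 - A i j • Pi.single i 1 := by
  rw [simpleReflection_mulVec, dotProduct_single_one]

variable [Fintype B] {M : CoxeterMatrix B} {A : Matrix B B ℤ}

theorem IsCartanMatrix.isLiftable (hA : IsCartanMatrix M A) :
    M.IsLiftable (simpleReflection A) := by
  intro i j
  refine ext_of_mulVec_single fun k => ?_
  obtain rfl | hij := eq_or_ne i j
  · rw [M.diagonal, pow_one, one_mulVec, ← mulVec_mulVec]
    simp only [simpleReflection_mulVec_single, mulVec_sub, mulVec_smul, hA.diag]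
    module
  · have hi := hA.diag i
    have hj := hA.diag j
    obtain ⟨hM, hp, hq⟩ | ⟨hM, hp, hq⟩ | ⟨hM, hp, hq⟩ | ⟨hM, hp, hq⟩ := hA.cases_of_ne hij
    all_goals
      simp only [hM, pow_succ, pow_zero, one_mul, one_mulVec, ← mulVec_mulVec]
      simp only [simpleReflection_mulVec_single, mulVec_sub, mulVec_smul, hi, hj, hp, hq]
      module

variable {G : Type*} [Group G]

/-- The geometric representation of a crystallographic Coxeter group on its root lattice. -/
def rootRep (cs : CoxeterSystem M G) (hA : IsCartanMatrix M A) : G →* Matrix B B ℤ :=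
  cs.lift ⟨simpleReflection A, hA.isLiftable⟩

variable (cs : CoxeterSystem M G) (hA : IsCartanMatrix M A)

@[simp] theorem rootRep_simple (i : B) : rootRep cs hA (cs.simple i) = simpleReflection A i :=
  cs.lift_apply_simple hA.isLiftable i

theorem rootRep_alternatingWord_mulVec_single {i j : B} (hij : i ≠ j) {k : ℕ} (hk : k < M i j) :
    ∃ a b : ℤ, 0 ≤ a ∧ 0 ≤ b ∧
      rootRep cs hA (cs.wordProd (alternatingWord i j k)) *ᵥ Pi.single i 1 =
        a • Pi.single i 1 + b • Pi.single j 1 := by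
  have hi := hA.diag i
  have hj := hA.diag j
  obtain ⟨hM, hp, hq⟩ | ⟨hM, hp, hq⟩ | ⟨hM, hp, hq⟩ | ⟨hM, hp, hq⟩ := hA.cases_of_ne hij
  all_goals
    rw [hM] at hk
    interval_cases k
  all_goals
    simp only [alternatingWord, List.concat_eq_append, List.nil_append, List.cons_append,
      wordProd_cons, wordProd_nil, mul_one, map_one, map_mul, rootRep_simple, one_mulVec,
      ← mulVec_mulVec, simpleReflection_mulVec_single, mulVec_sub, mulVec_smul, hi, hj, hp, hq]
  -- The pairs `(a, b)` are the positive roots in the `W_{ij}`-orbit of `α_i`.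
  all_goals
    first
    | exact ⟨1, 0, by simp, by simp, by module⟩
    | exact ⟨0, 1, by simp, by simp, by module⟩
    | exact ⟨1, 1, by simp, by simp, by module⟩
    | exact ⟨1, 2, by simp, by simp, by module⟩

theorem rootRep_apply_nonneg {w : G} {i : B} (hi : ¬cs.IsRightDescent w i) (k : B) :
    0 ≤ rootRep cs hA w k i := by
  induction hn : cs.length w using Nat.strong_induction_on generalizing w i with
  | _ n ih
  obtain rfl | hw := eq_or_ne w 1
  · rw [map_one, one_apply]
    split_ifs <;> decide
  obtain ⟨j, hj⟩ := cs.exists_rightDescent_of_ne_one hw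
  have hij : i ≠ j := fun h => hi (h ▸ hj)
  have hM : M i j ≠ 0 := by
    have := hA.cases_of_ne hij
    omega
  obtain ⟨m, hm, w', rfl, hlen, hi', hj'⟩ := exists_eq_mul_alternatingWord cs hi hM
  have hm0 : m ≠ 0 := by
    rintro rfl
    rw [alternatingWord, wordProd_nil, mul_one] at hj
    exact hj' hj
  obtain ⟨a, b, ha, hb, hab⟩ := rootRep_alternatingWord_mulVec_single cs hA hij hm
  have hcol := congrArg (rootRep cs hA w' *ᵥ ·) hab
  simp only [mulVec_add, mulVec_smul] at hcol
  rw [mulVec_mulVec, ← map_mul, mulVec_single_one, mulVec_single_one, mulVec_single_one] at hcol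
  refine (congrFun hcol k).ge.trans' ?_
  exact add_nonneg (mul_nonneg ha (ih _ (by omega) hi' rfl))
    (mul_nonneg hb (ih _ (by omega) hj' rfl))

theorem rootRep_apply_nonpos {w : G} {i : B} (hi : cs.IsRightDescent w i) (k : B) :
    rootRep cs hA w k i ≤ 0 := by
  have h := rootRep_apply_nonneg cs hA (cs.isRightDescent_iff_not_isRightDescent_mul.mp hi) k
  rw [map_mul, rootRep_simple, mul_apply_eq_vecMul, vecMul_simpleReflection] at h
  simp only [Pi.sub_apply, Pi.smul_apply, hA.diag, smul_eq_mul] at h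
  linarith

theorem vecMul_rootRep_mem {I : Set B} {L : Set (B → ℤ)}
    (hL : ∀ l ∈ L, ∀ i ∈ I, l - l i • A i ∈ L) {l : B → ℤ} (hl : l ∈ L) {w : G}
    (hw : w ∈ parabolic cs I) : l ᵥ* rootRep cs hA w ∈ L := by
  induction hw using Subgroup.closure_induction_right with
  | one => rwa [map_one, vecMul_one]
  | mul_right x _ y hy h =>
    obtain ⟨i, hi, rfl⟩ := hy
    rw [map_mul, ← vecMul_vecMul, rootRep_simple, vecMul_simpleReflection]
    exact hL _ h i hi
  | mul_inv_cancel x _ y hy h =>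
    obtain ⟨i, hi, rfl⟩ := hy
    rw [inv_simple, map_mul, ← vecMul_vecMul, rootRep_simple, vecMul_simpleReflection]
    exact hL _ h i hi

theorem row_rootRep_eq_single {I : Set B} {k : B} (hk : k ∉ I) {w : G}
    (hw : w ∈ parabolic cs I) : (rootRep cs hA w).row k = Pi.single k 1 := by
  rw [← single_one_vecMul]
  refine vecMul_rootRep_mem cs hA (L := {Pi.single k 1}) ?_ rfl hw
  rintro _ rfl i hi
  rw [Pi.single_eq_of_ne (ne_of_mem_of_not_mem hi hk), zero_smul, sub_zero]
  rfl

theorem mem_parabolic_sdiff_of_row_rootRep {I K : Set B} {w : G} (hw : w ∈ parabolic cs I)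
    (hK : ∀ k ∈ K, (rootRep cs hA w).row k = Pi.single k 1) :
    w ∈ parabolic cs (I \ K) := by
  induction hn : cs.length w using Nat.strong_induction_on generalizing w with
  | _ n ih
  obtain rfl | hw1 := eq_or_ne w 1
  · exact one_mem _
  obtain ⟨i, hi⟩ := cs.exists_rightDescent_of_ne_one hw1
  have not_fixed : (rootRep cs hA w).row i ≠ Pi.single i 1 := fun h => by
    have := rootRep_apply_nonpos cs hA hi i
    have := (congrFun h i).symm.trans_le this
    simp at this
  have hiI : i ∈ I := not_not.mp fun hiI => not_fixed (row_rootRep_eq_single cs hA hiI hw)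
  have hiK : i ∉ K := fun h => not_fixed (hK i h)
  have hs : cs.simple i ∈ parabolic cs (I \ K) := simple_mem_parabolic cs ⟨hiI, hiK⟩
  rw [← Subgroup.mul_mem_cancel_right _ hs]
  refine ih _ (by have := cs.isRightDescent_iff.mp hi; omega)
    (mul_mem hw (simple_mem_parabolic cs hiI)) (fun k hk => ?_) rfl
  rw [map_mul, ← single_one_vecMul, ← vecMul_vecMul, single_one_vecMul, hK k hk, rootRep_simple,
    vecMul_simpleReflection, Pi.single_eq_of_ne (ne_of_mem_of_not_mem hk hiK).symm,
    zero_smul, sub_zero]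

theorem rootRep_injective : Function.Injective (rootRep cs hA) := by
  refine (injective_iff_map_eq_one _).mpr fun w hw => ?_
  have h := mem_parabolic_sdiff_of_row_rootRep cs hA (I := Set.univ) (K := Set.univ) (w := w)
    (by simp [parabolic_univ]) fun k _ => by
      rw [hw, ← single_one_vecMul, vecMul_one]
  simpa [parabolic] using h

theorem vecMul_rootRep_wordProd (l : B → ℤ) (ω : List B) :
    l ᵥ* rootRep cs hA (cs.wordProd ω) = ω.foldl (fun l i => l - l i • A i) l := by
  induction ω generalizing l with
  | nil => rw [wordProd_nil, map_one, vecMul_one, List.foldl_nil]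
  | cons i ω ih =>
    rw [wordProd_cons, map_mul, ← vecMul_vecMul, rootRep_simple, vecMul_simpleReflection, ih,
      List.foldl_cons]

theorem rootRep_mulVec_eq_self {x : B → ℤ} (hx : A *ᵥ x = 0) (w : G) :
    rootRep cs hA w *ᵥ x = x := by
  induction w using cs.simple_induction_left with
  | one => rw [map_one, one_mulVec]
  | mul_simple_left w i hw =>
    have hi : A i ⬝ᵥ x = 0 := congrFun hx i
    rw [map_mul, ← mulVec_mulVec, hw, rootRep_simple, simpleReflection_mulVec, hi, zero_smul,
      sub_zero]

/-- For a null vector `x` of the Cartan matrix, `w` acts on the root lattice as the affine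
translation `v ↦ v + (l ⬝ᵥ v) x`. -/
structure IsTranslation (x : B → ℤ) (w : G) (l : B → ℤ) : Prop where
  dotProduct_eq_zero : l ⬝ᵥ x = 0
  rootRep_eq : rootRep cs hA w = 1 + vecMulVec x l

namespace IsTranslation

variable {cs hA} {x l l' : B → ℤ} {w w' : G}

theorem one : IsTranslation cs hA x 1 0 :=
  ⟨zero_dotProduct x, by rw [map_one, vecMulVec_zero, add_zero]⟩

theorem mul (h : IsTranslation cs hA x w l) (h' : IsTranslation cs hA x w' l') :
    IsTranslation cs hA x (w * w') (l + l') := by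
  refine ⟨by rw [add_dotProduct, h.1, h'.1, add_zero], ?_⟩
  rw [map_mul, h.2, h'.2, add_mul, mul_add, mul_add, vecMulVec_mul_vecMulVec, h.1, vecMulVec_add]
  simp [add_assoc, add_comm]

theorem inv (h : IsTranslation cs hA x w l) : IsTranslation cs hA x w⁻¹ (-l) := by
  refine ⟨by rw [neg_dotProduct, h.1, neg_zero], ?_⟩
  have hinv : (1 + vecMulVec x l) * (1 + vecMulVec x (-l)) = 1 := by
    rw [add_mul, mul_add, mul_add, vecMulVec_mul_vecMulVec, h.1, zero_smul, vecMulVec_zero,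
      vecMulVec_neg]
    simp
  rw [← h.2] at hinv
  calc rootRep cs hA w⁻¹ = rootRep cs hA w⁻¹ * (rootRep cs hA w * (1 + vecMulVec x (-l))) := by
        rw [hinv, mul_one]
    _ = 1 + vecMulVec x (-l) := by rw [← mul_assoc, ← map_mul, inv_mul_cancel, map_one, one_mul]

theorem conj (hx : A *ᵥ x = 0) (h : IsTranslation cs hA x w l) (g : G) :
    IsTranslation cs hA x (g⁻¹ * w * g) (l ᵥ* rootRep cs hA g) := by
  refine ⟨by rw [← dotProduct_mulVec, rootRep_mulVec_eq_self cs hA hx, h.1], ?_⟩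
  rw [map_mul, map_mul, h.2, mul_add, mul_one, add_mul, ← map_mul, inv_mul_cancel, map_one,
    mul_vecMulVec, vecMulVec_mul, rootRep_mulVec_eq_self cs hA hx]

theorem zpow (h : IsTranslation cs hA x w l) (k : ℤ) : IsTranslation cs hA x (w ^ k) (k • l) := by
  induction k with
  | zero => simpa using one
  | succ k hk =>
    rw [_root_.zpow_add_one, add_smul, one_smul]
    exact hk.mul h
  | pred k hk =>
    rw [_root_.zpow_sub_one, sub_smul, one_smul, sub_eq_add_neg]
    exact hk.mul h.inv

theorem wordProd {ω : List B} (hl : l ⬝ᵥ x = 0)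
    (h : ∀ i, ω.foldl (fun l i => l - l i • A i) (Pi.single i 1) = Pi.single i 1 + x i • l) :
    IsTranslation cs hA x (cs.wordProd ω) l := by
  refine ⟨hl, ext_of_single_vecMul fun i => ?_⟩
  rw [vecMul_rootRep_wordProd, h, vecMul_add, vecMul_one, vecMul_vecMulVec, single_one_dotProduct]

theorem unique (h : IsTranslation cs hA x w l) (h' : IsTranslation cs hA x w' l) : w = w' :=
  rootRep_injective cs hA (h.2.trans h'.2.symm)

end IsTranslation

/-- The functionals by which the elements of `N` translate along the null vector `x`. -/
def translationLattice (x : B → ℤ) (N : Subgroup G) : AddSubgroup (B → ℤ) where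
  carrier := {l | ∃ w ∈ N, IsTranslation cs hA x w l}
  zero_mem' := ⟨1, one_mem N, .one⟩
  add_mem' := fun ⟨w, hw, h⟩ ⟨w', hw', h'⟩ => ⟨w * w', mul_mem hw hw', h.mul h'⟩
  neg_mem' := fun ⟨w, hw, h⟩ => ⟨w⁻¹, inv_mem hw, h.inv⟩

variable {cs hA} {x l : B → ℤ} {N K : Subgroup G}

theorem mem_of_mem_translationLattice (hl : l ∈ translationLattice cs hA x N) {w : G}
    (hw : IsTranslation cs hA x w l) : w ∈ N := by
  obtain ⟨w', hw', h'⟩ := hl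
  rwa [hw.unique h']

theorem smul_mem_translationLattice (hx : A *ᵥ x = 0) {i : B}
    (hi : cs.simple i ∈ Subgroup.normalizer (N : Set G)) (hl : l ∈ translationLattice cs hA x N) :
    l i • A i ∈ translationLattice cs hA x N := by
  have ⟨w, hw, h⟩ := hl
  have hconj := h.conj hx (cs.simple i)
  rw [rootRep_simple, vecMul_simpleReflection] at hconj
  have hmem : (cs.simple i)⁻¹ * w * cs.simple i ∈ N := by
    rw [inv_simple]
    simpa using (Subgroup.mem_normalizer_iff.mp hi w).mp hw
  have := sub_mem hl (⟨_, hmem, hconj⟩ : l - l i • A i ∈ translationLattice cs hA x N)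
  rwa [sub_sub_cancel] at this

-- The commutator of `w` with a translation by `l` is a translation lying in the normal subgroup.
theorem vecMul_rootRep_sub_mem_translationLattice (hx : A *ᵥ x = 0) [N.Normal] {w : G} (hw : w ∈ N)
    (hl : l ∈ translationLattice cs hA x K) :
    l ᵥ* rootRep cs hA w - l ∈ translationLattice cs hA x N := by
  obtain ⟨t, -, ht⟩ := hl
  rw [sub_eq_neg_add]
  refine ⟨t⁻¹ * (w⁻¹ * t * w), ?_, ht.inv.mul (ht.conj hx w)⟩
  have := mul_mem (Subgroup.Normal.conj_mem ‹_› _ (inv_mem hw) t⁻¹) hw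
  simpa [mul_assoc] using this

theorem le_of_translationLattice_le (hK : ∀ w ∈ K, ∃ l, IsTranslation cs hA x w l)
    (h : translationLattice cs hA x K ≤ translationLattice cs hA x N) : K ≤ N := fun w hw =>
  have ⟨_, hl⟩ := hK w hw
  mem_of_mem_translationLattice (h ⟨w, hw, hl⟩) hl

end RootRepresentation

/-- Breadth-first enumeration of the orbit of a set of functionals under the reflections
`l ↦ l - l i • A i`, `i ∈ J`: `n` bounds the number of steps. -/
def reflectionOrbit {B : Type*} [DecidableEq (B → ℤ)] (A : Matrix B B ℤ) (J : List B) :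
    ℕ → List (B → ℤ) → List (B → ℤ) → List (B → ℤ)
  | n + 1, l :: queue, seen =>
    let new := ((J.map fun i => l - l i • A i).filter (· ∉ seen)).dedup
    reflectionOrbit A J n (queue ++ new) (new ++ seen)
  | _, _, seen => seen

theorem mem_of_isCoprime_smul_mem {G : Type*} [AddCommGroup G] {Λ : AddSubgroup G} {x : G}
    {m n : ℤ} (hmn : IsCoprime m n) (hm : m • x ∈ Λ) (hn : n • x ∈ Λ) : x ∈ Λ := by
  obtain ⟨a, b, hab⟩ := hmn
  rw [← one_smul ℤ x, ← hab, add_smul, mul_smul, mul_smul]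
  exact add_mem (zsmul_mem hm a) (zsmul_mem hn b)

namespace AffineF4

/-- The Coxeter matrix of `[3,3,4,3]`, the affine Coxeter group of type `F₄`. -/
def coxeterMatrix : CoxeterMatrix (Fin 5) where
  M := .of cox5
  isSymm := .ext fun i => by fin_cases i <;> decide
  diagonal := by decide
  off_diagonal i := by fin_cases i <;> decide

/-- The Cartan matrix of affine type `F₄`; the nodes `0`, `1`, `2` are the long simple roots. -/
def cartan : Matrix (Fin 5) (Fin 5) ℤ :=
  !![2, -1, 0, 0, 0; -1, 2, -1, 0, 0; 0, -1, 2, -1, 0; 0, 0, -2, 2, -1; 0, 0, 0, -1, 2]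

theorem isCartanMatrix : IsCartanMatrix coxeterMatrix cartan where
  diag := by decide
  nonpos i := by fin_cases i <;> decide
  eq_zero i := by fin_cases i <;> decide
  coxeter := by decide
  mul_le := by decide

/-- The generator of the radical of the affine root lattice. -/
def nullRoot : Fin 5 → ℤ := ![1, 2, 3, 4, 2]

theorem cartan_mulVec_nullRoot : cartan *ᵥ nullRoot = 0 := by decide

theorem dotProduct_nullRoot (l : Fin 5 → ℤ) :
    l ⬝ᵥ nullRoot = l 0 + 2 * l 1 + 3 * l 2 + 4 * l 3 + 2 * l 4 := by
  simp only [dotProduct, nullRoot, Fin.sum_univ_five, cons_val]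
  ring

theorem eq_sum_smul_cartan {l : Fin 5 → ℤ} (hl : l ⬝ᵥ nullRoot = 0) :
    l = (-l 0) • cartan 1 + (-2 * l 0 - l 1) • cartan 2 +
      (2 * l 1 + 4 * l 2 + 6 * l 3 + 3 * l 4) • cartan 3 +
      (2 * l 0 + 5 * l 1 + 8 * l 2 + 11 * l 3 + 6 * l 4) • cartan 4 := by
  rw [dotProduct_nullRoot] at hl
  ext i
  fin_cases i <;> simp [cartan] <;> linarith

section ReflectionStable

variable {Λ : AddSubgroup (Fin 5 → ℤ)} {k : ℤ}

theorem smul_cartan_mem {i j : Fin 5} (hj : ∀ l ∈ Λ, l j • cartan j ∈ Λ) (m : ℤ)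
    (hij : cartan i j = m) (hi : k • cartan i ∈ Λ) : (k * m) • cartan j ∈ Λ := by
  simpa [hij] using hj _ hi

theorem smul_cartan_mem_of_eq_neg_one {i j : Fin 5} (hj : ∀ l ∈ Λ, l j • cartan j ∈ Λ)
    (hij : cartan i j = -1) (hi : k • cartan i ∈ Λ) : k • cartan j ∈ Λ := by
  simpa using neg_mem (smul_cartan_mem hj _ hij hi)

theorem mem_of_forall_smul_cartan_mem {l : Fin 5 → ℤ} {m n : ℤ} (h1 : m • cartan 1 ∈ Λ)
    (h2 : m • cartan 2 ∈ Λ) (h3 : n • cartan 3 ∈ Λ) (h4 : n • cartan 4 ∈ Λ)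
    (hl : l ⬝ᵥ nullRoot = 0) (hm : ∀ i ∈ ({0, 1} : Set (Fin 5)), m ∣ l i)
    (hn : ∀ i, n ∣ l i) : l ∈ Λ := by
  have smul_mem {a b : ℤ} {i : Fin 5} (h : a • cartan i ∈ Λ) : a ∣ b → b • cartan i ∈ Λ := by
    rintro ⟨c, rfl⟩
    rw [mul_comm, mul_smul]
    exact zsmul_mem h c
  have hn' (a b c d e : ℤ) : n ∣ a * l 0 + b * l 1 + c * l 2 + d * l 3 + e * l 4 := by
    refine dvd_add (dvd_add (dvd_add (dvd_add ?_ ?_) ?_) ?_) ?_ <;> exact (hn _).mul_left _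
  rw [eq_sum_smul_cartan hl]
  refine add_mem (add_mem (add_mem (smul_mem h1 ?_) (smul_mem h2 ?_)) (smul_mem h3 ?_))
    (smul_mem h4 ?_)
  · exact (hm 0 (by simp)).neg_right
  · exact dvd_sub ((hm 0 (by simp)).mul_left _) (hm 1 (by simp))
  · simpa using hn' 0 2 4 6 3
  · exact hn' 2 5 8 11 6

theorem dvd_of_forall_dvd {m : ℤ} (hΛ : ∀ l ∈ Λ, ∀ i, l i • cartan i ∈ Λ)
    (hm : ∀ k : ℤ, k • cartan 0 ∈ Λ → m ∣ k) {l : Fin 5 → ℤ} (hl : l ∈ Λ) :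
    m ∣ l 0 ∧ m ∣ l 1 ∧ m ∣ l 2 ∧ m ∣ 2 * l 3 ∧ m ∣ 2 * l 4 := by
  have h1 {k : ℤ} (h : k • cartan 1 ∈ Λ) : m ∣ k :=
    hm k (smul_cartan_mem_of_eq_neg_one (hΛ · · 0) rfl h)
  have h2 {k : ℤ} (h : k • cartan 2 ∈ Λ) : m ∣ k :=
    h1 (smul_cartan_mem_of_eq_neg_one (hΛ · · 1) rfl h)
  have h3 {k : ℤ} (h : k • cartan 3 ∈ Λ) : m ∣ 2 * k := by
    simpa [mul_comm] using h2 (smul_cartan_mem (hΛ · · 2) (-2) rfl h)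
  have h4 {k : ℤ} (h : k • cartan 4 ∈ Λ) : m ∣ 2 * k :=
    h3 (smul_cartan_mem_of_eq_neg_one (hΛ · · 3) rfl h)
  exact ⟨hm _ (hΛ l hl 0), h1 (hΛ l hl 1), h2 (hΛ l hl 2), h3 (hΛ l hl 3), h4 (hΛ l hl 4)⟩

theorem mem_of_smul_cartan_zero_mem {m : ℤ} (hΛ : ∀ l ∈ Λ, ∀ i, l i • cartan i ∈ Λ)
    (h0 : m • cartan 0 ∈ Λ) {l : Fin 5 → ℤ} (hl : l ⬝ᵥ nullRoot = 0) (hm : ∀ i, m ∣ l i) :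
    l ∈ Λ := by
  have h1 := smul_cartan_mem_of_eq_neg_one (j := 1) (hΛ · · 1) rfl h0
  have h2 := smul_cartan_mem_of_eq_neg_one (j := 2) (hΛ · · 2) rfl h1
  have h3 := smul_cartan_mem_of_eq_neg_one (j := 3) (hΛ · · 3) rfl h2
  have h4 := smul_cartan_mem_of_eq_neg_one (j := 4) (hΛ · · 4) rfl h3
  exact mem_of_forall_smul_cartan_mem h1 h2 h3 h4 hl (fun i _ => hm i) hm

end ReflectionStable

section Translations

variable {G : Type*} [Group G] (cs : CoxeterSystem coxeterMatrix G) {K N : Subgroup G}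

/-- The elements of `[3,3,4,3]` acting as translations of Euclidean 4-space. -/
abbrev IsTranslation : G → (Fin 5 → ℤ) → Prop :=
  _root_.IsTranslation cs isCartanMatrix nullRoot

/-- The lattice of translations contained in a subgroup of `[3,3,4,3]`. -/
abbrev translationLattice (N : Subgroup G) : AddSubgroup (Fin 5 → ℤ) :=
  _root_.translationLattice cs isCartanMatrix nullRoot N

/-- The word `aστσ`. -/
def translationWord : List (Fin 5) := [0, 1, 2, 3, 2, 1, 4, 3, 2, 3, 4, 1, 2, 3, 2, 1]

/-- The word `aστ`. -/
def glideWord : List (Fin 5) := [0, 1, 2, 3, 2, 1, 4, 3, 2, 3, 4]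

/-- The basic translation `aστσ`, along a long root. -/
def translation : G := cs.wordProd translationWord

/-- The glide reflection `aστ`. -/
def glide : G := cs.wordProd glideWord

theorem isTranslation_translation : IsTranslation cs (translation cs) (cartan 0) :=
  .wordProd (by decide) (by decide +kernel)

theorem isTranslation_glide_sq : IsTranslation cs (glide cs ^ 2) ![2, 0, 0, 0, -1] := by
  rw [glide, sq, ← wordProd_append]
  exact .wordProd (by decide) (by decide +kernel)

variable {cs}

theorem smul_cartan_mem_translationLattice_of_normal [K.Normal] :
    ∀ l ∈ translationLattice cs K, ∀ i, l i • cartan i ∈ translationLattice cs K :=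
  fun _ hl _ => smul_mem_translationLattice cartan_mulVec_nullRoot
    (by simp [Subgroup.normalizer_eq_top]) hl

theorem smul_cartan_zero_mem_iff {k : ℤ} :
    k • cartan 0 ∈ translationLattice cs K ↔ translation cs ^ k ∈ K :=
  have h := (isTranslation_translation cs).zpow k
  ⟨fun hk => mem_of_mem_translationLattice hk h, fun hk => ⟨_, hk, h⟩⟩

theorem mem_translationLattice_top {l : Fin 5 → ℤ} (hl : l ⬝ᵥ nullRoot = 0) :
    l ∈ translationLattice cs (⊤ : Subgroup G) :=
  mem_of_smul_cartan_zero_mem (m := 1) smul_cartan_mem_translationLattice_of_normal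
    (smul_cartan_zero_mem_iff.mpr (Subgroup.mem_top _)) hl fun _ => one_dvd _

/-- The 24 long roots of `F₄`, as functionals on the affine root lattice. -/
def longRoots : List (Fin 5 → ℤ) :=
  reflectionOrbit cartan (List.finRange 5) 24 [cartan 0] [cartan 0]

theorem sub_smul_cartan_mem_longRoots :
    ∀ l ∈ longRoots, ∀ i, l - l i • cartan i ∈ longRoots := by
  decide +kernel

/-- Four long roots spanning the functionals that vanish on the null root. -/
def rigidRoots : List (Fin 5 → ℤ) :=
  [![2, -1, 0, 0, 0], ![-1, 2, -1, 0, 0], ![0, -1, 2, -1, 0], ![0, -1, 0, 0, 1]]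

theorem rigidRoots_subset_longRoots : ∀ l ∈ rigidRoots, l ∈ longRoots := by decide +kernel

theorem eq_of_mem_longRoots_of_three_dvd_sub :
    ∀ l ∈ rigidRoots, ∀ l' ∈ longRoots, (∀ i, 3 ∣ (l' - l) i) → l' = l := by
  decide +kernel

theorem eq_vecMulVec_of_vecMul_eq_zero {X : Matrix (Fin 5) (Fin 5) ℤ}
    (hX : ∀ l ∈ rigidRoots, l ᵥ* X = 0) : X = vecMulVec nullRoot (X.row 0) := by
  ext i j
  have h (l) (hl : l ∈ rigidRoots) : (l ᵥ* X) j = 0 := congrFun (hX l hl) j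
  simp only [rigidRoots, List.forall_mem_cons, vecMul, dotProduct, Fin.sum_univ_five,
    cons_val] at h
  obtain ⟨h1, h2, h3, h4, -⟩ := h
  fin_cases i <;> simp [nullRoot, vecMulVec_apply] <;> linarith

theorem exists_isTranslation_of_vecMul_eq {w : G}
    (hw : ∀ l ∈ rigidRoots, l ᵥ* rootRep cs isCartanMatrix w = l) : ∃ l, IsTranslation cs w l := by
  let X := rootRep cs isCartanMatrix w - 1
  have hX : X *ᵥ nullRoot = 0 := by
    rw [sub_mulVec, one_mulVec, rootRep_mulVec_eq_self _ _ cartan_mulVec_nullRoot, sub_self]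
  refine ⟨X.row 0, congrFun hX 0, ?_⟩
  rw [← sub_eq_iff_eq_add']
  refine eq_vecMulVec_of_vecMul_eq_zero fun l hl => ?_
  rw [vecMul_sub, vecMul_one, hw l hl, sub_self]

theorem exists_isTranslation_of_mem [K.Normal]
    (hK : ∀ l ∈ translationLattice cs K, ∀ i, 3 ∣ l i) {w : G} (hw : w ∈ K) :
    ∃ l, IsTranslation cs w l := by
  refine exists_isTranslation_of_vecMul_eq fun l hl => ?_
  have hl0 : l ⬝ᵥ nullRoot = 0 := by revert l; decide +kernel
  refine eq_of_mem_longRoots_of_three_dvd_sub l hl _ ?_ <| hK _ <|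
    vecMul_rootRep_sub_mem_translationLattice cartan_mulVec_nullRoot hw
      (mem_translationLattice_top hl0)
  exact vecMul_rootRep_mem cs isCartanMatrix (I := Set.univ) (L := {l | l ∈ longRoots})
    (fun l hl i _ => sub_smul_cartan_mem_longRoots l hl i) (rigidRoots_subset_longRoots l hl)
    (by simp [parabolic_univ])

theorem eq_normalClosure_translation_pow [K.Normal] (hK : translation cs ^ 3 ∈ K)
    (hdvd : ∀ k : ℤ, translation cs ^ k ∈ K → 3 ∣ k) :
    K = Subgroup.normalClosure {translation cs ^ 3} := by
  have three_dvd (l) (hl : l ∈ translationLattice cs K) (i) : 3 ∣ l i := by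
    have := dvd_of_forall_dvd smul_cartan_mem_translationLattice_of_normal
      (fun k hk => hdvd k (smul_cartan_zero_mem_iff.mp hk)) hl
    fin_cases i <;> simp <;> omega
  refine le_antisymm (le_of_translationLattice_le
    (fun w hw => exists_isTranslation_of_mem three_dvd hw) fun l hl => ?_)
    (Subgroup.normalClosure_le_normal (Set.singleton_subset_iff.mpr hK))
  have ⟨_, _, h⟩ := hl
  refine mem_of_smul_cartan_zero_mem smul_cartan_mem_translationLattice_of_normal
    (smul_cartan_zero_mem_iff.mpr ?_) h.dotProduct_eq_zero (three_dvd l hl)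
  rw [zpow_ofNat]
  exact Subgroup.subset_normalClosure (Set.mem_singleton _)

theorem eq_normalClosure_glide_pow [K.Normal] (hK : glide cs ^ 12 ∈ K)
    (hdvd : ∀ k : ℤ, translation cs ^ k ∈ K → 12 ∣ k) :
    K = Subgroup.normalClosure {glide cs ^ 12} := by
  set N := Subgroup.normalClosure {glide cs ^ 12}
  have dvd (l) (hl : l ∈ translationLattice cs K) :=
    dvd_of_forall_dvd smul_cartan_mem_translationLattice_of_normal
      (fun k hk => hdvd k (smul_cartan_zero_mem_iff.mp hk)) hl
  have six_dvd (l) (hl : l ∈ translationLattice cs K) (i) : 6 ∣ l i := by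
    have := dvd l hl
    fin_cases i <;> simp <;> omega
  refine le_antisymm (le_of_translationLattice_le (fun w hw => exists_isTranslation_of_mem
    (fun l hl i => (by decide : (3 : ℤ) ∣ 6).trans (six_dvd l hl i)) hw) fun l hl => ?_)
    (Subgroup.normalClosure_le_normal (Set.singleton_subset_iff.mpr hK))
  have hΛ := smul_cartan_mem_translationLattice_of_normal (cs := cs) (K := N)
  have hglide : (6 : ℤ) • ![2, 0, 0, 0, -1] ∈ translationLattice cs N := by
    refine ⟨glide cs ^ 12, Subgroup.subset_normalClosure (Set.mem_singleton _), ?_⟩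
    have := (isTranslation_glide_sq cs).zpow 6
    rwa [zpow_ofNat, ← pow_mul] at this
  have h4 : (6 : ℤ) • cartan 4 ∈ translationLattice cs N := by simpa using neg_mem (hΛ _ hglide 4)
  have h3 := smul_cartan_mem_of_eq_neg_one (j := 3) (hΛ · · 3) rfl h4
  have h2 : (12 : ℤ) • cartan 2 ∈ translationLattice cs N := by
    simpa using neg_mem (smul_cartan_mem (hΛ · · 2) (-2) rfl h3)
  have h1 := smul_cartan_mem_of_eq_neg_one (j := 1) (hΛ · · 1) rfl h2
  have ⟨_, _, h⟩ := hl
  refine mem_of_forall_smul_cartan_mem h1 h2 h3 h4 h.dotProduct_eq_zero ?_ (six_dvd l hl)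
  simp [dvd l hl]

theorem simple_zero_mem_iff {H : Subgroup G} (h : ∀ i ≠ 0, cs.simple i ∈ H) :
    cs.simple 0 ∈ H ↔ translation cs ∈ H := by
  rw [translation, translationWord, wordProd_cons]
  refine (Subgroup.mul_mem_cancel_right _ ?_).symm
  refine list_prod_mem fun x hx => ?_
  obtain ⟨i, hi, rfl⟩ := List.mem_map.mp hx
  refine h i ?_
  rintro rfl
  revert hi
  decide

variable (cs) in
/-- The normal subgroup of all translations in `[3,3,4,3]`. -/
def translationSubgroup : Subgroup G where
  carrier := {w | ∃ l, IsTranslation cs w l}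
  one_mem' := ⟨0, .one⟩
  mul_mem' := fun ⟨_, h⟩ ⟨_, h'⟩ => ⟨_, h.mul h'⟩
  inv_mem' := fun ⟨_, h⟩ => ⟨_, h.inv⟩

instance : (translationSubgroup cs).Normal where
  conj_mem := fun w ⟨l, h⟩ g => ⟨l ᵥ* rootRep cs isCartanMatrix g⁻¹, by
    simpa using h.conj cartan_mulVec_nullRoot g⁻¹⟩

theorem translationSubgroup_sup_eq_top {F : Subgroup G} (hF : ∀ i ≠ 0, cs.simple i ∈ F) :
    translationSubgroup cs ⊔ F = ⊤ := by
  have h : ∀ i ≠ 0, cs.simple i ∈ translationSubgroup cs ⊔ F := fun i hi =>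
    Subgroup.mem_sup_right (hF i hi)
  rw [eq_top_iff, ← cs.subgroup_closure_range_simple, Subgroup.closure_le]
  rintro _ ⟨i, rfl⟩
  obtain rfl | hi := eq_or_ne i 0
  · exact (simple_zero_mem_iff h).mpr
      (Subgroup.mem_sup_left ⟨_, isTranslation_translation cs⟩)
  · exact h i hi

theorem smul_cartan_mem_translationLattice (hN : ∀ i ≠ 0, cs.simple i ∈ N) {i : Fin 5}
    (hi : i ≠ 0) : ∀ l ∈ translationLattice cs N, l i • cartan i ∈ translationLattice cs N :=
  fun _ hl => smul_mem_translationLattice cartan_mulVec_nullRoot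
    (Subgroup.le_normalizer (hN i hi)) hl

-- Modulo 3 the off-diagonal Cartan entries along the diagram are units, so a single nonzero
-- coordinate propagates to every finite node, and these roots generate all translations.
theorem cartan_mem_of_not_three_dvd {Λ : AddSubgroup (Fin 5 → ℤ)}
    (hΛ : ∀ i ≠ 0, ∀ l ∈ Λ, l i • cartan i ∈ Λ) (h3 : ∀ i, (3 : ℤ) • cartan i ∈ Λ)
    {l : Fin 5 → ℤ} (hl : l ∈ Λ) (hl0 : l ⬝ᵥ nullRoot = 0) (hdvd : ¬∀ i, 3 ∣ l i) :
    cartan 0 ∈ Λ := by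
  have cartan_mem {l} (hl : l ∈ Λ) {i} (hi : i ≠ 0) (hdvd : ¬3 ∣ l i) : cartan i ∈ Λ :=
    mem_of_isCoprime_smul_mem (Int.prime_three.coprime_iff_not_dvd.mpr hdvd) (h3 i) (hΛ i hi l hl)
  obtain ⟨i, hi0, hi⟩ : ∃ i ≠ 0, ¬3 ∣ l i := by
    rw [dotProduct_nullRoot] at hl0
    by_contra! h
    have h1 := h 1 (by decide)
    have h3 := h 3 (by decide)
    have h4 := h 4 (by decide)
    refine hdvd fun i => (eq_or_ne i 0).elim (fun hi => ?_) (h i)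
    subst hi
    omega
  have h2 : cartan 2 ∈ Λ := by
    have hi := cartan_mem hl hi0 hi
    fin_cases i
    · exact absurd rfl hi0
    · exact cartan_mem (l := cartan 1) hi (by decide) (by decide)
    · exact hi
    · exact cartan_mem (l := cartan 3) hi (by decide) (by decide)
    · have h3 : cartan 3 ∈ Λ := cartan_mem (l := cartan 4) hi (by decide) (by decide)
      exact cartan_mem h3 (by decide) (by decide)
  have h1 : cartan 1 ∈ Λ := cartan_mem h2 (by decide) (by decide)
  have h3 : cartan 3 ∈ Λ := cartan_mem h2 (by decide) (by decide)
  have h4 : cartan 4 ∈ Λ := cartan_mem h3 (by decide) (by decide)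
  rw [← one_smul ℤ (cartan _)] at h1 h2 h3 h4
  exact mem_of_forall_smul_cartan_mem h1 h2 h3 h4 (by decide) (fun _ _ => one_dvd _)
    fun _ => one_dvd _

theorem le_sup_of_simple_zero_notMem [K.Normal] (hK : translation cs ^ 3 ∈ K) (hKN : K ≤ N)
    (hN : ∀ i ≠ 0, cs.simple i ∈ N) (h0 : cs.simple 0 ∉ N) {F : Subgroup G} (hFN : F ≤ N)
    (hF : ∀ i ≠ 0, cs.simple i ∈ F) : N ≤ K ⊔ F := by
  have hK0 : (3 : ℤ) • cartan 0 ∈ translationLattice cs K :=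
    smul_cartan_zero_mem_iff.mpr (by rwa [zpow_ofNat])
  have mem_K {l : Fin 5 → ℤ} (hl : l ⬝ᵥ nullRoot = 0) (h3 : ∀ i, 3 ∣ l i) :
      l ∈ translationLattice cs K :=
    mem_of_smul_cartan_zero_mem smul_cartan_mem_translationLattice_of_normal hK0 hl h3
  intro g hg
  obtain ⟨w, ⟨l, hl⟩, z, hz, rfl⟩ := Subgroup.mem_sup_of_normal_left.mp
    ((translationSubgroup_sup_eq_top hF).symm ▸ Subgroup.mem_top g)
  refine Subgroup.mul_mem_sup ?_ hz
  have hlN : l ∈ translationLattice cs N :=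
    ⟨w, (Subgroup.mul_mem_cancel_right _ (hFN hz)).mp hg, hl⟩
  refine mem_of_mem_translationLattice (mem_K hl.dotProduct_eq_zero ?_) hl
  by_contra hdvd
  have : cartan 0 ∈ translationLattice cs N :=
    cartan_mem_of_not_three_dvd (fun i => smul_cartan_mem_translationLattice hN)
      (fun i => ?_) hlN hl.dotProduct_eq_zero hdvd
  · exact h0 ((simple_zero_mem_iff hN).mpr
      (mem_of_mem_translationLattice this (isTranslation_translation cs)))
  · have ⟨u, hu, h⟩ := mem_K (l := (3 : ℤ) • cartan i) (by
      rw [smul_dotProduct]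
      exact smul_eq_zero_of_right _ (congrFun cartan_mulVec_nullRoot i)) (by simp)
    exact ⟨u, hKN hu, h⟩

end Translations

/-- `W5` as a Coxeter group. -/
def w5CoxeterSystem : CoxeterSystem coxeterMatrix W5 := ⟨MulEquiv.refl _⟩

/-- The Coxeter matrix of `[3,4,3,3]`. -/
def coxeterMatrixDual : CoxeterMatrix (Fin 5) where
  M := .of cox5d
  isSymm := .ext fun i => by fin_cases i <;> decide
  diagonal := by decide
  off_diagonal i := by fin_cases i <;> decide

theorem reindex_coxeterMatrixDual : coxeterMatrixDual.reindex Fin.revPerm = coxeterMatrix := by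
  ext i j
  fin_cases i <;> fin_cases j <;> rfl

/-- `V5` as a Coxeter group of type `[3,3,4,3]`, with the order of its generators reversed. -/
def v5CoxeterSystem : CoxeterSystem coxeterMatrix V5 :=
  reindex_coxeterMatrixDual ▸
    CoxeterSystem.reindex (⟨MulEquiv.refl _⟩ : CoxeterSystem coxeterMatrixDual V5) Fin.revPerm

theorem v5CoxeterSystem_simple (i : Fin 5) : v5CoxeterSystem.simple i = u i.rev := by
  have simple_cast {M M' : CoxeterMatrix (Fin 5)} (h : M = M') (cs : CoxeterSystem M V5) :
      (h ▸ cs).simple = cs.simple := by subst h; rfl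
  rw [v5CoxeterSystem, simple_cast]
  rfl

theorem glide_w5CoxeterSystem : glide w5CoxeterSystem = v 0 * sg5 * tu5 := by
  simp only [glide, glideWord, wordProd_cons, wordProd_nil, mul_one, sg5, tu5, mul_assoc]
  rfl

theorem translation_v5CoxeterSystem :
    translation v5CoxeterSystem = u 4 * tud * sgd * tud := by
  simp only [translation, translationWord, wordProd_cons, wordProd_nil, mul_one,
    v5CoxeterSystem_simple, tud, sgd, mul_assoc]
  rfl

end AffineF4

section StandardHom

variable {B B' G G' : Type*} [Group G] [Group G'] {M : CoxeterMatrix B} {M' : CoxeterMatrix B'}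
  (cs : CoxeterSystem M G) (cs' : CoxeterSystem M' G') {f : B → B'}
  (hf : ∀ i j, M' (f i) (f j) = M i j)

/-- The homomorphism between Coxeter groups induced by a label-preserving map of diagrams. -/
def standardHom : G →* G' :=
  cs.lift ⟨fun i => cs'.simple (f i), fun i j => hf i j ▸ cs'.simple_mul_simple_pow _ _⟩

@[simp] theorem standardHom_simple (i : B) :
    standardHom cs cs' hf (cs.simple i) = cs'.simple (f i) :=
  cs.lift_apply_simple _ i

theorem standardHom_wordProd (ω : List B) :
    standardHom cs cs' hf (cs.wordProd ω) = cs'.wordProd (ω.map f) := by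
  simp only [wordProd, map_list_prod, List.map_map, Function.comp_def, standardHom_simple]

theorem map_standardHom_parabolic (I : Set B) :
    (parabolic cs I).map (standardHom cs cs' hf) = parabolic cs' (f '' I) := by
  simp only [parabolic, MonoidHom.map_closure, Set.image_image, standardHom_simple]

theorem range_standardHom : (standardHom cs cs' hf).range = parabolic cs' (Set.range f) := by
  rw [MonoidHom.range_eq_map, ← parabolic_univ cs, map_standardHom_parabolic, Set.image_univ]

end StandardHom

theorem dvd_of_map_zpow_eq_one {G M : Type*} [Group G] [Monoid M] (φ : G →* M) {g : G} {p n : ℕ}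
    [Fact p.Prime] (hn : φ g ^ p ^ n ≠ 1) (hn' : φ g ^ p ^ (n + 1) = 1) {k : ℤ}
    (hk : φ (g ^ k) = 1) : ((p ^ (n + 1) : ℕ) : ℤ) ∣ k := by
  rw [← orderOf_eq_prime_pow hn hn', ← φ.coe_toHomUnits, orderOf_units,
    orderOf_dvd_iff_zpow_eq_one, ← map_zpow, Units.ext_iff, φ.coe_toHomUnits, hk, Units.val_one]

theorem nonempty_closure_mulEquiv {G Q : Type*} [Group G] [Group Q] {φ : G →* Q} {S : Set Q}
    {N : Subgroup G} [N.Normal] (hS : φ.range = Subgroup.closure S) (hN : φ.ker = N) :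
    Nonempty (Subgroup.closure S ≃* G ⧸ N) :=
  ⟨(MulEquiv.subgroupCongr hS.symm).trans <| (QuotientGroup.quotientKerEquivRange φ).symm.trans <|
    QuotientGroup.quotientMulEquivOfEq hN⟩

namespace Hyperbolic

/-- The Coxeter matrix of `[3,3,4,3,3]`. -/
def coxeterMatrix : CoxeterMatrix (Fin 6) where
  M := .of cox6
  isSymm := .ext fun i => by fin_cases i <;> decide
  diagonal := by decide
  off_diagonal i := by fin_cases i <;> decide

/-- A Cartan matrix of type `[3,3,4,3,3]`, extending that of affine type `F₄`. -/
def cartan : Matrix (Fin 6) (Fin 6) ℤ :=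
  !![2, -1, 0, 0, 0, 0; -1, 2, -1, 0, 0, 0; 0, -1, 2, -1, 0, 0; 0, 0, -2, 2, -1, 0;
    0, 0, 0, -1, 2, -1; 0, 0, 0, 0, -1, 2]

theorem isCartanMatrix : IsCartanMatrix coxeterMatrix cartan where
  diag := by decide
  nonpos i := by fin_cases i <;> decide
  eq_zero i := by fin_cases i <;> decide
  coxeter i := by fin_cases i <;> decide
  mul_le i := by fin_cases i <;> decide

/-- `W` as a Coxeter group. -/
def coxeterSystem : CoxeterSystem coxeterMatrix W := ⟨MulEquiv.refl _⟩

/-- The reduction modulo 3 of the geometric representation of `[3,3,4,3,3]`. -/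
def modThreeRep : W →* Matrix (Fin 6) (Fin 6) (ZMod 3) :=
  (Int.castRingHom (ZMod 3)).mapMatrix.toMonoidHom.comp (rootRep coxeterSystem isCartanMatrix)

theorem modThreeRep_eq_one_iff {g : W} :
    modThreeRep g = 1 ↔ ∀ k, (modThreeRep g).row k = Pi.single k 1 := by
  refine ⟨fun h k => by rw [h, ← single_one_vecMul, vecMul_one], fun h => ?_⟩
  refine ext_of_single_vecMul fun k => ?_
  rw [single_one_vecMul, h, vecMul_one]

theorem modThreeRep_row_eq_single_iff {g : W} {k : Fin 6} :
    (modThreeRep g).row k = Pi.single k 1 ↔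
      ∀ i, 3 ∣ ((rootRep coxeterSystem isCartanMatrix g).row k - Pi.single k 1 : Fin 6 → ℤ) i := by
  have single_cast (i) : ((Pi.single k 1 : Fin 6 → ℤ) i : ZMod 3) =
      (Pi.single k 1 : Fin 6 → ZMod 3) i := by
    rw [Pi.single_apply, Pi.single_apply, Int.cast_ite, Int.cast_one, Int.cast_zero]
  rw [funext_iff]
  refine forall_congr' fun i => ?_
  rw [← single_cast, eq_comm]
  exact ZMod.intCast_eq_intCast_iff_dvd_sub _ _ 3

theorem modThreeRep_row_eq_single {I : Set (Fin 6)} {k : Fin 6} (hk : k ∉ I) {g : W}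
    (hg : g ∈ parabolic coxeterSystem I) : (modThreeRep g).row k = Pi.single k 1 := by
  rw [modThreeRep_row_eq_single_iff, row_rootRep_eq_single coxeterSystem isCartanMatrix hk hg]
  simp

theorem modThreeRep_simple_row_ne_single (k : Fin 6) :
    (modThreeRep (coxeterSystem.simple k)).row k ≠ Pi.single k 1 := fun h => by
  have := modThreeRep_row_eq_single_iff.mp h k
  rw [rootRep_simple, ← single_one_vecMul, vecMul_simpleReflection] at this
  simp [isCartanMatrix.diag] at this

/-- The space `𝔽₂⁸` of which the 2-modular representation consists of three copies. -/
abbrev Octet : Type := Fin 8 → ZMod 2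

namespace Octet

/-- The action of a map of the coordinates. -/
def permute (σ : Fin 8 → Fin 8) : Module.End (ZMod 2) Octet := LinearMap.funLeft _ _ σ

/-- An additive map over the prime field, as a linear map. -/
def ofFun (f : Octet → Octet) (hf : ∀ x y, f (x + y) = f x + f y) : Module.End (ZMod 2) Octet :=
  (AddMonoidHom.mk' f hf).toZModLinearMap 2

/-- The block by which the generator `a` acts. -/
def shear : Module.End (ZMod 2) Octet :=
  ofFun (fun x => let s := x 0 + x 1 + x 2 + x 3; let r := x 6 + x 7
    ![x 0 + r, x 1 + r, x 2 + r, x 3 + r, x 4 + s, x 5 + s, x 6, x 7]) fun x y => by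
      ext i
      fin_cases i <;> simp <;> ring

/-- The block by which `f` acts on the octet that it fixes. -/
def transvection : Module.End (ZMod 2) Octet :=
  ofFun (fun x => ![x 0, x 1, x 2, x 3, x 4, x 5 + x 7, x 6, x 7]) fun x y => by
      ext i
      fin_cases i <;> simp
      ring

/-- The block by which `f` exchanges two octets. -/
def exchange : Module.End (ZMod 2) Octet :=
  ofFun (fun x => ![x 5, x 5 + x 7, x 4, x 4 + x 6, x 2, x 0, x 2 + x 3, x 0 + x 1]) fun x y => by
      ext i
      fin_cases i <;> simp <;> ring

end Octet

/-- The block monomial map with a single block `f j`, from octet `σ j` to octet `j`, in row `j`. -/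
def blockMonomial (σ : Fin 3 → Fin 3) (f : Fin 3 → Module.End (ZMod 2) Octet) :
    Module.End (ZMod 2) (Fin 3 → Octet) :=
  LinearMap.pi fun j => f j ∘ₗ LinearMap.proj (σ j)

open Octet in
/-- The action of the generators on three octets. The matrices were found by computer; they only
need to satisfy the Coxeter relations and to give `aστσ` order 4, `aστ` order dividing 4 and `fτστ`
order dividing 3. -/
def octetGen : Fin 6 → Module.End (ZMod 2) (Fin 3 → Octet) :=
  let b := permute ![0, 1, 4, 6, 2, 5, 3, 7]
  let c := permute ![2, 3, 0, 1, 4, 5, 6, 7]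
  let c' := permute ![0, 1, 2, 3, 5, 4, 7, 6]
  let d := permute ![1, 0, 2, 3, 4, 5, 6, 7]
  ![blockMonomial id ![shear, shear, shear], blockMonomial id ![b, b, b],
    blockMonomial id ![c, c, c'], blockMonomial ![0, 2, 1] ![d, 1, 1],
    blockMonomial ![1, 0, 2] ![1, 1, d],
    blockMonomial ![0, 2, 1] ![transvection, exchange, exchange]]

theorem octet_ext {f g : Module.End (ZMod 2) (Fin 3 → Octet)}
    (h : ∀ j i, f (Pi.single j (Pi.single i 1)) = g (Pi.single j (Pi.single i 1))) : f = g := by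
  ext j i : 4
  simpa using congrFun (h j i) _

set_option maxRecDepth 100000 in
theorem isLiftable_octetGen : coxeterMatrix.IsLiftable octetGen := by
  intro i j
  refine octet_ext ?_
  revert i j
  decide +kernel

/-- A representation of `[3,3,4,3,3]` on `𝔽₂²⁴` in which the facet translation has order 4. -/
def octetRep : W →* Module.End (ZMod 2) (Fin 3 → Octet) :=
  coxeterSystem.lift ⟨octetGen, isLiftable_octetGen⟩

theorem octetRep_wordProd (ω : List (Fin 6)) :
    octetRep (coxeterSystem.wordProd ω) = (ω.map octetGen).prod := by
  rw [wordProd, map_list_prod, List.map_map]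
  exact congrArg (fun f => (ω.map f).prod) <| funext fun i =>
    coxeterSystem.lift_apply_simple isLiftable_octetGen i

theorem row_wordProd (ω : List (Fin 6)) (k : Fin 6) :
    (rootRep coxeterSystem isCartanMatrix (coxeterSystem.wordProd ω)).row k =
      ω.foldl (fun l i => l - l i • cartan i) (Pi.single k 1) := by
  rw [← vecMul_rootRep_wordProd coxeterSystem isCartanMatrix, single_one_vecMul]

theorem modThreeRep_wordProd_pow_eq_one {ω : List (Fin 6)} {n : ℕ}
    (h : ∀ k i, 3 ∣ ((List.replicate n ω).flatten.foldl (fun l i => l - l i • cartan i)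
      (Pi.single k 1) - Pi.single k 1 : Fin 6 → ℤ) i) :
    modThreeRep (coxeterSystem.wordProd ω) ^ n = 1 := by
  rw [← map_pow, wordProd_pow, modThreeRep_eq_one_iff]
  intro k
  rw [modThreeRep_row_eq_single_iff, row_wordProd]
  exact h k

theorem modThreeRep_wordProd_ne_one {ω : List (Fin 6)} (k i : Fin 6)
    (h : ¬3 ∣ (ω.foldl (fun l i => l - l i • cartan i) (Pi.single k 1) - Pi.single k 1 :
      Fin 6 → ℤ) i) : modThreeRep (coxeterSystem.wordProd ω) ≠ 1 := fun h1 => by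
  have := modThreeRep_row_eq_single_iff.mp (modThreeRep_eq_one_iff.mp h1 k) i
  rw [row_wordProd] at this
  exact h this

/-- The orbit of the `k`-th coordinate functional under the parabolic subgroup omitting the node
`j`. For an interior node `j` this orbit is finite; the bound `50` exceeds its length. -/
def isolatedOrbit (j k : Fin 6) : List (Fin 6 → ℤ) :=
  reflectionOrbit cartan ((List.finRange 6).filter (· ≠ j)) 50 [Pi.single k 1] [Pi.single k 1]

set_option maxRecDepth 100000 in
theorem sub_smul_cartan_mem_isolatedOrbit : ∀ j, j ≠ 0 ∧ j ≠ 5 → ∀ k ≠ j,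
    ∀ l ∈ isolatedOrbit j k, ∀ i ≠ j, l - l i • cartan i ∈ isolatedOrbit j k := by
  decide +kernel

set_option maxRecDepth 100000 in
theorem eq_single_of_mem_isolatedOrbit : ∀ j, j ≠ 0 ∧ j ≠ 5 → ∀ k ≠ j,
    Pi.single k 1 ∈ isolatedOrbit j k ∧
    ∀ l ∈ isolatedOrbit j k, (∀ i, 3 ∣ (l - Pi.single k 1 : Fin 6 → ℤ) i) → l = Pi.single k 1 := by
  decide +kernel

/-- The map from the facet group `[3,3,4,3]` to `[3,3,4,3,3]`, onto `⟨a,b,c,d,e⟩`. -/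
def facetHom : W5 →* W :=
  standardHom AffineF4.w5CoxeterSystem coxeterSystem (f := Fin.castSucc) fun i => by
    fin_cases i <;> decide

/-- The map from the vertex-figure group `[3,4,3,3]` to `[3,3,4,3,3]`, onto `⟨b,c,d,e,f⟩`. The
generators of `V5` are numbered from `f` down to `b`, matching `v5CoxeterSystem`. -/
def vertexFigureHom : V5 →* W :=
  standardHom AffineF4.v5CoxeterSystem coxeterSystem (f := fun i => i.castSucc.rev) fun i => by
    fin_cases i <;> decide

open AffineF4

theorem range_facetHom : facetHom.range = parabolic coxeterSystem {5}ᶜ := by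
  rw [facetHom, range_standardHom]
  congr 1
  ext i
  revert i
  simp only [Set.mem_range, Set.mem_compl_singleton_iff]
  decide

theorem range_vertexFigureHom : vertexFigureHom.range = parabolic coxeterSystem {0}ᶜ := by
  rw [vertexFigureHom, range_standardHom]
  congr 1
  ext i
  revert i
  simp only [Set.mem_range, Set.mem_compl_singleton_iff]
  decide

theorem map_vertexFigureHom_parabolic_compl_zero :
    (parabolic v5CoxeterSystem {0}ᶜ).map vertexFigureHom =
      parabolic coxeterSystem ({5}ᶜ ∩ {0}ᶜ) := by
  rw [vertexFigureHom, map_standardHom_parabolic]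
  congr 1
  ext i
  revert i
  simp only [Set.mem_image, Set.mem_inter_iff, Set.mem_compl_singleton_iff]
  decide

theorem facetHom_glide : facetHom (glide w5CoxeterSystem) =
    coxeterSystem.wordProd (glideWord.map Fin.castSucc) :=
  standardHom_wordProd ..

theorem facetHom_translation : facetHom (translation w5CoxeterSystem) =
    coxeterSystem.wordProd (translationWord.map Fin.castSucc) :=
  standardHom_wordProd ..

theorem vertexFigureHom_translation : vertexFigureHom (translation v5CoxeterSystem) =
    coxeterSystem.wordProd (translationWord.map fun i => i.castSucc.rev) :=
  standardHom_wordProd ..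

theorem modThreeRep_facetHom_glide_pow :
    modThreeRep (facetHom (glide w5CoxeterSystem)) ^ 6 = 1 := by
  rw [facetHom_glide]
  exact modThreeRep_wordProd_pow_eq_one (by decide +kernel)

theorem modThreeRep_facetHom_translation_pow :
    modThreeRep (facetHom (translation w5CoxeterSystem)) ^ 3 = 1 := by
  rw [facetHom_translation]
  exact modThreeRep_wordProd_pow_eq_one (by decide +kernel)

theorem modThreeRep_facetHom_translation_ne_one :
    modThreeRep (facetHom (translation w5CoxeterSystem)) ≠ 1 := by
  rw [facetHom_translation]
  exact modThreeRep_wordProd_ne_one 0 0 (by decide +kernel)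

theorem modThreeRep_vertexFigureHom_translation_pow :
    modThreeRep (vertexFigureHom (translation v5CoxeterSystem)) ^ 3 = 1 := by
  rw [vertexFigureHom_translation]
  exact modThreeRep_wordProd_pow_eq_one (by decide +kernel)

theorem modThreeRep_vertexFigureHom_translation_ne_one :
    modThreeRep (vertexFigureHom (translation v5CoxeterSystem)) ≠ 1 := by
  rw [vertexFigureHom_translation]
  exact modThreeRep_wordProd_ne_one 5 5 (by decide +kernel)

section

set_option maxRecDepth 100000

theorem octetRep_facetHom_glide_pow :
    octetRep (facetHom (glide w5CoxeterSystem)) ^ 4 = 1 := by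
  rw [facetHom_glide, octetRep_wordProd]
  exact octet_ext (by decide +kernel)

theorem octetRep_facetHom_translation_pow :
    octetRep (facetHom (translation w5CoxeterSystem)) ^ 4 = 1 := by
  rw [facetHom_translation, octetRep_wordProd]
  exact octet_ext (by decide +kernel)

theorem octetRep_facetHom_translation_sq_ne_one :
    octetRep (facetHom (translation w5CoxeterSystem)) ^ 2 ≠ 1 := by
  rw [facetHom_translation, octetRep_wordProd]
  refine fun h => absurd (fun j i => DFunLike.congr_fun h (Pi.single j (Pi.single i 1))) ?_
  decide +kernel

theorem octetRep_vertexFigureHom_translation_pow :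
    octetRep (vertexFigureHom (translation v5CoxeterSystem)) ^ 3 = 1 := by
  rw [vertexFigureHom_translation, octetRep_wordProd]
  exact octet_ext (by decide +kernel)

end

theorem row_eq_single_of_modThreeRep {I : Set (Fin 6)} {j k : Fin 6} (hj : j ≠ 0 ∧ j ≠ 5)
    (hjI : j ∉ I) {g : W} (hg : g ∈ parabolic coxeterSystem I)
    (h : (modThreeRep g).row k = Pi.single k 1) :
    (rootRep coxeterSystem isCartanMatrix g).row k = Pi.single k 1 := by
  obtain rfl | hkj := eq_or_ne k j
  · exact row_rootRep_eq_single coxeterSystem isCartanMatrix hjI hg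
  obtain ⟨single_mem, isolated⟩ := eq_single_of_mem_isolatedOrbit j hj k hkj
  refine isolated _ ?_ (modThreeRep_row_eq_single_iff.mp h)
  rw [← single_one_vecMul]
  exact vecMul_rootRep_mem coxeterSystem isCartanMatrix (L := {l | l ∈ isolatedOrbit j k})
    (fun l hl i hi => sub_smul_cartan_mem_isolatedOrbit j hj k hkj l hl i
      (ne_of_mem_of_not_mem hi hjI)) single_mem hg

theorem mem_parabolic_inter_of_modThreeRep_eq {I J : Set (Fin 6)} {j : Fin 6}
    (hj : j ≠ 0 ∧ j ≠ 5) (hjI : j ∉ I) {x y : W} (hx : x ∈ parabolic coxeterSystem I)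
    (hy : y ∈ parabolic coxeterSystem J) (hxy : modThreeRep x = modThreeRep y) :
    x ∈ parabolic coxeterSystem (I ∩ J) := by
  rw [← Set.sdiff_sdiff_right_self]
  refine mem_parabolic_sdiff_of_row_rootRep coxeterSystem isCartanMatrix hx fun k hk => ?_
  refine row_eq_single_of_modThreeRep hj hjI hx ?_
  rw [hxy]
  exact modThreeRep_row_eq_single hk.2 hy

section Intersection

variable {Q : Type*} [Group Q] {p : W →* Q}

theorem map_parabolic_inf_le (hp : p.ker ≤ modThreeRep.ker) {I J : Set (Fin 6)} {j : Fin 6}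
    (hj : j ≠ 0 ∧ j ≠ 5) (hjI : j ∉ I) :
    (parabolic coxeterSystem I).map p ⊓ (parabolic coxeterSystem J).map p ≤
      (parabolic coxeterSystem (I ∩ J)).map p := by
  rintro _ ⟨⟨x, hx, rfl⟩, y, hy, hyx⟩
  refine ⟨x, mem_parabolic_inter_of_modThreeRep_eq hj hjI hx hy ?_, rfl⟩
  exact modThreeRep.eq_iff.mpr (hp (p.eq_iff.mp hyx.symm))

theorem map_simple_notMem_map_parabolic (hp : p.ker ≤ modThreeRep.ker) {I : Set (Fin 6)}
    {k : Fin 6} (hk : k ∉ I) :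
    p (coxeterSystem.simple k) ∉ (parabolic coxeterSystem I).map p := by
  rintro ⟨x, hx, hxk⟩
  have hxk : modThreeRep x = modThreeRep (coxeterSystem.simple k) :=
    modThreeRep.eq_iff.mpr (hp (p.eq_iff.mp hxk))
  refine modThreeRep_simple_row_ne_single k ?_
  rw [← hxk]
  exact modThreeRep_row_eq_single hk hx

-- Neither parabolic subgroup is finite here, so the mod 3 reduction alone does not suffice: the
-- preimage in `V5` of the facet group is controlled through its translations.
theorem map_parabolic_facet_inf_vertexFigure_le (hp : p.ker ≤ modThreeRep.ker)
    (htrans : vertexFigureHom (translation v5CoxeterSystem) ^ 3 ∈ p.ker) :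
    (parabolic coxeterSystem {5}ᶜ).map p ⊓ (parabolic coxeterSystem {0}ᶜ).map p ≤
      (parabolic coxeterSystem ({5}ᶜ ∩ {0}ᶜ)).map p := by
  let φ := p.comp vertexFigureHom
  let F := parabolic v5CoxeterSystem {0}ᶜ
  let N := ((parabolic coxeterSystem {5}ᶜ).map p).comap φ
  have map_F : F.map φ = (parabolic coxeterSystem ({5}ᶜ ∩ {0}ᶜ)).map p := by
    rw [← Subgroup.map_map, map_vertexFigureHom_parabolic_compl_zero]
  have hFN : F ≤ N := by
    rw [← Subgroup.map_le_iff_le_comap, map_F]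
    exact Subgroup.map_mono (parabolic_mono _ Set.inter_subset_left)
  have simple_mem (i) (hi : i ≠ 0) : v5CoxeterSystem.simple i ∈ F := simple_mem_parabolic _ hi
  have simple_zero_notMem : v5CoxeterSystem.simple 0 ∉ N := by
    rw [Subgroup.mem_comap, MonoidHom.comp_apply, vertexFigureHom, standardHom_simple]
    exact map_simple_notMem_map_parabolic hp (by decide)
  have hN : N ≤ φ.ker ⊔ F :=
    le_sup_of_simple_zero_notMem (by rwa [MonoidHom.mem_ker, MonoidHom.comp_apply, map_pow])
      (MonoidHom.ker_le_comap ..) (fun i hi => hFN (simple_mem i hi)) simple_zero_notMem hFN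
      simple_mem
  rw [← range_vertexFigureHom]
  rintro _ ⟨hq, _, ⟨z, rfl⟩, rfl⟩
  rw [← map_F]
  have := Subgroup.mem_map_of_mem φ (hN (show z ∈ N from hq))
  rwa [Subgroup.map_sup, (Subgroup.map_eq_bot_iff _).mpr le_rfl, bot_sup_eq] at this

theorem map_parabolic_inf_map_parabolic (hp : p.ker ≤ modThreeRep.ker)
    (htrans : vertexFigureHom (translation v5CoxeterSystem) ^ 3 ∈ p.ker) (I J : Set (Fin 6)) :
    (parabolic coxeterSystem I).map p ⊓ (parabolic coxeterSystem J).map p =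
      (parabolic coxeterSystem (I ∩ J)).map p := by
  have map_mono {S T : Set (Fin 6)} (h : S ⊆ T) :
      (parabolic coxeterSystem S).map p ≤ (parabolic coxeterSystem T).map p :=
    Subgroup.map_mono (parabolic_mono coxeterSystem h)
  refine le_antisymm ?_ (le_inf (map_mono Set.inter_subset_left) (map_mono Set.inter_subset_right))
  by_cases hI : ∀ j, j ≠ 0 ∧ j ≠ 5 → j ∈ I; swap
  · push Not at hI
    obtain ⟨j, hj, hjI⟩ := hI
    exact map_parabolic_inf_le hp hj hjI
  by_cases hJ : ∀ j, j ≠ 0 ∧ j ≠ 5 → j ∈ J; swap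
  · push Not at hJ
    obtain ⟨j, hj, hjJ⟩ := hJ
    rw [inf_comm, Set.inter_comm]
    exact map_parabolic_inf_le hp hj hjJ
  by_cases hIJ : I ⊆ J
  · exact inf_le_left.trans_eq (by rw [Set.inter_eq_left.mpr hIJ])
  by_cases hJI : J ⊆ I
  · exact inf_le_right.trans_eq (by rw [Set.inter_eq_right.mpr hJI])
  have facet_inf := map_parabolic_facet_inf_vertexFigure_le hp htrans
  obtain ⟨i, hiI, hiJ⟩ := Set.not_subset.mp hIJ
  obtain ⟨j, hjJ, hjI⟩ := Set.not_subset.mp hJI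
  have hI' : I = {j}ᶜ := by
    ext k
    grind
  have hJ' : J = {i}ᶜ := by
    ext k
    grind
  obtain ⟨rfl, rfl⟩ | ⟨rfl, rfl⟩ : i = 0 ∧ j = 5 ∨ i = 5 ∧ j = 0 := by grind
  · rwa [hI', hJ']
  · rwa [hI', hJ', inf_comm, Set.inter_comm]

end Intersection

/-- The representation of `[3,3,4,3,3]` whose image is the automorphism group of the polytope. -/
def rep : W →* GL (Fin 6) (ZMod 3) × (Module.End (ZMod 2) (Fin 3 → Octet))ˣ :=
  modThreeRep.toHomUnits.prod octetRep.toHomUnits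

theorem mem_ker_rep_iff {g : W} : g ∈ rep.ker ↔ modThreeRep g = 1 ∧ octetRep g = 1 := by
  rw [MonoidHom.mem_ker, rep, MonoidHom.prod_apply, Prod.mk_eq_one, Units.ext_iff, Units.ext_iff]
  rfl

instance : Finite (Module.End (ZMod 2) (Fin 3 → Octet)) := .of_injective _ DFunLike.coe_injective

theorem ker_rep_comp_facetHom : (rep.comp facetHom).ker =
    Subgroup.normalClosure {glide w5CoxeterSystem ^ 12} := by
  refine eq_normalClosure_glide_pow ?_ fun k hk => ?_
  · rw [← MonoidHom.comap_ker, Subgroup.mem_comap, mem_ker_rep_iff]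
    simp only [map_pow]
    rw [pow_mul _ 6 2, modThreeRep_facetHom_glide_pow, pow_mul _ 4 3, octetRep_facetHom_glide_pow,
      one_pow, one_pow]
    exact ⟨rfl, rfl⟩
  · rw [← MonoidHom.comap_ker, Subgroup.mem_comap, mem_ker_rep_iff, map_zpow] at hk
    have three_dvd := dvd_of_map_zpow_eq_one modThreeRep (p := 3) (n := 0)
      (by simpa using modThreeRep_facetHom_translation_ne_one)
      modThreeRep_facetHom_translation_pow hk.1
    have four_dvd := dvd_of_map_zpow_eq_one octetRep (p := 2) (n := 1)
      octetRep_facetHom_translation_sq_ne_one octetRep_facetHom_translation_pow hk.2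
    omega

theorem vertexFigureHom_translation_pow_mem_ker_rep :
    vertexFigureHom (translation v5CoxeterSystem) ^ 3 ∈ rep.ker := by
  rw [mem_ker_rep_iff, map_pow, map_pow]
  exact ⟨modThreeRep_vertexFigureHom_translation_pow, octetRep_vertexFigureHom_translation_pow⟩

theorem ker_rep_comp_vertexFigureHom : (rep.comp vertexFigureHom).ker =
    Subgroup.normalClosure {translation v5CoxeterSystem ^ 3} := by
  refine eq_normalClosure_translation_pow ?_ fun k hk => ?_
  · rw [← MonoidHom.comap_ker, Subgroup.mem_comap, map_pow]
    exact vertexFigureHom_translation_pow_mem_ker_rep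
  · rw [← MonoidHom.comap_ker, Subgroup.mem_comap, mem_ker_rep_iff, map_zpow] at hk
    exact dvd_of_map_zpow_eq_one modThreeRep (p := 3) (n := 0)
      (by simpa using modThreeRep_vertexFigureHom_translation_ne_one)
      modThreeRep_vertexFigureHom_translation_pow hk.1

theorem map_parabolic_eq_closure {Q : Type*} [Group Q] (p : W →* Q) (I : Set (Fin 6)) :
    (parabolic coxeterSystem I).map p = Subgroup.closure ((fun i => p (w i)) '' I) := by
  rw [parabolic, MonoidHom.map_closure, Set.image_image]
  rfl

theorem range_comp_facetHom {Q : Type*} [Group Q] (p : W →* Q) :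
    (p.comp facetHom).range =
      Subgroup.closure {p (w 0), p (w 1), p (w 2), p (w 3), p (w 4)} := by
  have compl_five : ({5}ᶜ : Set (Fin 6)) = {0, 1, 2, 3, 4} := by
    ext i
    fin_cases i <;> simp
  rw [MonoidHom.range_comp, range_facetHom, map_parabolic_eq_closure, compl_five]
  simp only [Set.image_insert_eq, Set.image_singleton]

theorem range_comp_vertexFigureHom {Q : Type*} [Group Q] (p : W →* Q) :
    (p.comp vertexFigureHom).range =
      Subgroup.closure {p (w 1), p (w 2), p (w 3), p (w 4), p (w 5)} := by
  have compl_zero : ({0}ᶜ : Set (Fin 6)) = {1, 2, 3, 4, 5} := by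
    ext i
    fin_cases i <;> simp
  rw [MonoidHom.range_comp, range_vertexFigureHom, map_parabolic_eq_closure, compl_zero]
  simp only [Set.image_insert_eq, Set.image_singleton]

theorem nonempty_facet_mulEquiv {Q : Type*} [Group Q] {p : W →* Q} (hp : p.ker = rep.ker) :
    Nonempty (Subgroup.closure {p (w 0), p (w 1), p (w 2), p (w 3), p (w 4)} ≃* Gq 6) := by
  refine nonempty_closure_mulEquiv (range_comp_facetHom p) ?_
  rw [← MonoidHom.comap_ker, hp, MonoidHom.comap_ker, ker_rep_comp_facetHom,
    glide_w5CoxeterSystem]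

theorem nonempty_vertexFigure_mulEquiv {Q : Type*} [Group Q] {p : W →* Q} (hp : p.ker = rep.ker) :
    Nonempty (Subgroup.closure {p (w 1), p (w 2), p (w 3), p (w 4), p (w 5)} ≃* Vq) := by
  refine nonempty_closure_mulEquiv (range_comp_vertexFigureHom p) ?_
  rw [← MonoidHom.comap_ker, hp, MonoidHom.comap_ker, ker_rep_comp_vertexFigureHom,
    translation_v5CoxeterSystem]

theorem closure_image_inf_closure_image {Q : Type*} [Group Q] {p : W →* Q} (hp : p.ker = rep.ker)
    (I J : Set (Fin 6)) :
    Subgroup.closure ((fun i => p (w i)) '' I) ⊓ Subgroup.closure ((fun i => p (w i)) '' J) =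
      Subgroup.closure ((fun i => p (w i)) '' (I ∩ J)) := by
  simp only [← map_parabolic_eq_closure]
  refine map_parabolic_inf_map_parabolic ?_ ?_ I J
  · exact hp.le.trans fun g hg => (mem_ker_rep_iff.mp hg).1
  · exact hp.ge vertexFigureHom_translation_pow_mem_ker_rep

end Hyperbolic

/-- There is a finite quotient Q of the Coxeter group W = [3,3,4,3,3] whose
a,...,e-parabolic is [3,3,4,3]_{(6,6,0,0)}, whose b,...,f-parabolic is
[3,4,3,3]_{(3,0,0,0)}, and which satisfies the intersection property; hence a finite
locally toroidal polytope of type {{3,3,4,3}_{(6,6,0,0)}, {3,4,3,3}_{(3,0,0,0)}} exists. -/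
theorem stmt_19 :
    ∃ (Q : Type) (_ : Group Q) (p : W →* Q),
      Finite Q ∧ Function.Surjective p ∧
      Nonempty
        ((Subgroup.closure ({p (w 0), p (w 1), p (w 2), p (w 3), p (w 4)} : Set Q)) ≃* Gq 6) ∧
      Nonempty
        ((Subgroup.closure ({p (w 1), p (w 2), p (w 3), p (w 4), p (w 5)} : Set Q)) ≃* Vq) ∧
      ∀ I J : Set (Fin 6),
        Subgroup.closure ((fun i => p (w i)) '' I) ⊓ Subgroup.closure ((fun i => p (w i)) '' J) =
          Subgroup.closure ((fun i => p (w i)) '' (I ∩ J)) := by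
  have ker_eq : Hyperbolic.rep.rangeRestrict.ker = Hyperbolic.rep.ker :=
    Hyperbolic.rep.ker_rangeRestrict
  exact ⟨Hyperbolic.rep.range, inferInstance, Hyperbolic.rep.rangeRestrict, inferInstance,
    Hyperbolic.rep.rangeRestrict_surjective, Hyperbolic.nonempty_facet_mulEquiv ker_eq,
    Hyperbolic.nonempty_vertexFigure_mulEquiv ker_eq,
    Hyperbolic.closure_image_inf_closure_image ker_eq⟩
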